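/- Let $d\ge 1$ be an integer. Both walks below act on $\mathbb{C}^d\otimes\mathbb{C}^2\otimes\mathbb{C}^2$ with basis $|n,a,b\rangle$, $n\in\mathbb{Z}/d\mathbb{Z}$, $a,b\in\{\downarrow,\uparrow\}$ (positions are taken modulo $d$). For $\theta\in\mathbb{R}$ let $C(\theta)=\begin{pmatrix}\cos\theta&\sin\theta\\ \sin\theta&-\cos\theta\end{pmatrix}$ in the ordered basis $|\downarrow\rangle,|\uparrow\rangle$. Recycled-coin walk (registers: position, first coin, second coin). For $\phi\in\mathbb{R}$ let $U(\phi)=(I\otimes M)\,S\,(I\otimes\widehat C(\phi))$, where $\widehat C(\phi)=|\downarrow\rangle\langle\downarrow|\otimes C(\tfrac{\pi}{4})+|\uparrow\rangle\langle\uparrow|\otimes C(\tfrac{\pi}{4}(1+\phi))$, where $S|n,c_1,\downarrow\rangle=|n-1,c_1,\downarrow\rangle$ and $S|n,c_1,\uparrow\rangle=|n+1,c_1,\uparrow\rangle$, and where $M$ swaps the two coins. Put $p(n,t,\phi;\psi_0)=\sum_{c_1,c_2}|\langle n,c_1,c_2|U(\phi)^t|\psi_0\rangle|^2$. Walk with memory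 (registers: position, memory, coin). Let $U_{\mathcal M}=S_{\mathcal M}\,(I\otimes I\otimes C(\tfrac{\pi}{4}))$, where $S_{\mathcal M}$ maps $|n,\downarrow,\downarrow\rangle\mapsto|n-1,\downarrow,\downarrow\rangle$, $|n,\downarrow,\uparrow\rangle\mapsto|n+1,\uparrow,\uparrow\rangle$, $|n,\uparrow,\downarrow\rangle\mapsto|n+1,\uparrow,\downarrow\rangle$, $|n,\uparrow,\uparrow\rangle\mapsto|n-1,\downarrow,\uparrow\rangle$. Put $p_{\mathcal M}(n,t;\psi_0)=\sum_{m,c}|\langle n,m,c|U_{\mathcal M}^t|\psi_0\rangle|^2$. A vector of $\mathbb{C}^4$ is read as a state of the last two registers as follows. For the recycled-coin walk its entries are the coordinates in the ordered basis $|\downarrow\downarrow\rangle,|\downarrow\uparrow\rangle,|\uparrow\downarrow\rangle,|\uparrow\uparrow\rangle$ (first coin, second coin). For the walk with memory its entries are the coordinates in the ordered basis $|\downarrow\downarrow\rangle,|\uparrow\downarrow\rangle,|\downarrow\uparrow\rangle,|\uparrow\uparrow\rangle$, written (memory, coin), i.e. the lexicographic order of (coin, memory). Let $P$ be the $4\times4$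 permutation matrix sending $(\alpha,\beta,\gamma,\delta)^T$ to $(\alpha,\gamma,\delta,\beta)^T$ (rows $e_1,e_3,e_4,e_2$), and let $P^*$ be its conjugate transpose. Let $v\in\mathbb{C}^4$ be a unit vector. Then for all $n\in\mathbb{Z}/d\mathbb{Z}$ and all integers $t\ge 0$, $$p_{\mathcal M}(n,t;|0\rangle\otimes P^*v)=p(n,t,2;|0\rangle\otimes v).$$ In particular, for every $n$ and every $T\ge1$ the averages $\frac1T\sum_{t=1}^T p_{\mathcal M}(n,t;|0\rangle\otimes P^*v)$ and $\frac1T\sum_{t=1}^T p(n,t,2;|0\rangle\otimes v)$ coincide; hence as $T\to\infty$ one of them converges to a limit $L$ if and only if the other does, so the limiting distributions coincide whenever they exist. -/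

import Mathlib

open scoped Matrix Kronecker

noncomputable section

namespace CycleWalk

/-- A register with basis `|↓⟩ = 0`, `|↑⟩ = 1`. -/
abbrev Spin := Fin 2

abbrev dn : Spin := 0

abbrev up : Spin := 1

/-- Basis labels `|n, a, b⟩` of `ℂ^d ⊗ ℂ² ⊗ ℂ²`. For the recycled-coin walk `a, b` are the two coins
(`b` is the active one); for the walk with memory `a` is the memory and `b` is the coin. -/
abbrev Label (d : ℕ) := ZMod d × (Spin × Spin)

/-- The coin `C(θ)`. -/
def C (θ : ℝ) : Matrix Spin Spin ℂ :=
  !![(Real.cos θ : ℂ), (Real.sin θ : ℂ); (Real.sin θ : ℂ), -(Real.cos θ : ℂ)]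

/-- The linear operator given on basis vectors by `|x⟩ ↦ |f x⟩`; its `(x, y)` entry is `⟨x|f y⟩`. -/
def basisMap {X : Type*} [DecidableEq X] (f : X → X) : Matrix X X ℂ :=
  Matrix.of fun x y => if x = f y then 1 else 0

/-! ### The recycled-coin walk -/

/-- `Ĉ(φ) = |↓⟩⟨↓| ⊗ C(π/4) + |↑⟩⟨↑| ⊗ C((π/4)(1+φ))`. -/
def coinFlip (φ : ℝ) : Matrix (Spin × Spin) (Spin × Spin) ℂ :=
  Matrix.single dn dn (1 : ℂ) ⊗ₖ C (Real.pi / 4) +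
    Matrix.single up up (1 : ℂ) ⊗ₖ C (Real.pi / 4 * (1 + φ))

/-- `|n,c₁,↓⟩ ↦ |n-1,c₁,↓⟩`, `|n,c₁,↑⟩ ↦ |n+1,c₁,↑⟩`. -/
def shift (d : ℕ) : Matrix (Label d) (Label d) ℂ :=
  basisMap fun x => (if x.2.2 = dn then x.1 - 1 else x.1 + 1, x.2)

/-- The memory update `M`, swapping the two coins. -/
def swapCoins : Matrix (Spin × Spin) (Spin × Spin) ℂ := basisMap Prod.swap

/-- `U(φ) = (I_P ⊗ M) · S · (I_P ⊗ Ĉ(φ))`. -/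
def U (d : ℕ) [NeZero d] (φ : ℝ) : Matrix (Label d) (Label d) ℂ :=
  ((1 : Matrix (ZMod d) (ZMod d) ℂ) ⊗ₖ swapCoins) * shift d *
    ((1 : Matrix (ZMod d) (ZMod d) ℂ) ⊗ₖ coinFlip φ)

/-- `p(n,t,φ;ψ₀)`. -/
def p (d : ℕ) [NeZero d] (n : ZMod d) (t : ℕ) (φ : ℝ) (ψ₀ : Label d → ℂ) : ℝ :=
  ∑ c₁ : Spin, ∑ c₂ : Spin, ‖((U d φ ^ t) *ᵥ ψ₀) (n, c₁, c₂)‖ ^ 2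

/-! ### The walk with memory -/

/-- `|n,↓,↓⟩ ↦ |n-1,↓,↓⟩`, `|n,↓,↑⟩ ↦ |n+1,↑,↑⟩`, `|n,↑,↓⟩ ↦ |n+1,↑,↓⟩`, `|n,↑,↑⟩ ↦ |n-1,↓,↑⟩`
(position, memory, coin). -/
def shiftMem (d : ℕ) : Matrix (Label d) (Label d) ℂ :=
  basisMap fun x =>
    match x with
    | (n, 0, 0) => (n - 1, dn, dn)
    | (n, 0, 1) => (n + 1, up, up)
    | (n, 1, 0) => (n + 1, up, dn)
    | (n, 1, 1) => (n - 1, dn, up)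

/-- `U_𝓜 = S_𝓜 · (I_P ⊗ I_M ⊗ C(π/4))`. -/
def UMem (d : ℕ) [NeZero d] : Matrix (Label d) (Label d) ℂ :=
  shiftMem d *
    ((1 : Matrix (ZMod d) (ZMod d) ℂ) ⊗ₖ ((1 : Matrix Spin Spin ℂ) ⊗ₖ C (Real.pi / 4)))

/-- `p_𝓜(n,t;ψ₀)`. -/
def pMem (d : ℕ) [NeZero d] (n : ZMod d) (t : ℕ) (ψ₀ : Label d → ℂ) : ℝ :=
  ∑ m : Spin, ∑ c : Spin, ‖((UMem d ^ t) *ᵥ ψ₀) (n, m, c)‖ ^ 2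

/-! ### Initial states -/

/-- `|0⟩ ⊗ ∑ᵢ vᵢ |bᵢ⟩`: the state at position `0` whose coordinate vector in the ordered basis `b` of
the two remaining registers is `v`. -/
def localized (d : ℕ) (b : Fin 4 → Spin × Spin) (v : Fin 4 → ℂ) : Label d → ℂ :=
  ∑ i : Fin 4, v i • Pi.single ((0 : ZMod d), b i) (1 : ℂ)

/-- Ordered basis for the recycled-coin walk, labels (first coin, second coin):
`|↓↓⟩, |↓↑⟩, |↑↓⟩, |↑↑⟩`. -/
def coinBasis : Fin 4 → Spin × Spin := ![(dn, dn), (dn, up), (up, dn), (up, up)]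

/-- Ordered basis for the walk with memory, labels (memory, coin): `|↓↓⟩, |↑↓⟩, |↓↑⟩, |↑↑⟩`, so the
memory varies fastest. In this ordering one step of the walk is, in Fourier space with
`x = exp(2πik/d)` and `y = exp(-2πik/d)`, the matrix
`(1/√2) [x,0,x,0; 0,y,0,y; 0,x,0,-x; y,0,-y,0]`. -/
def memBasis : Fin 4 → Spin × Spin := ![(dn, dn), (up, dn), (dn, up), (up, up)]

/-- The permutation matrix `P`, sending `(α,β,γ,δ)` to `(α,γ,δ,β)`. -/
def P : Matrix (Fin 4) (Fin 4) ℂ :=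
  !![1, 0, 0, 0; 0, 0, 1, 0; 0, 0, 0, 1; 0, 1, 0, 0]

/-- The average `(1/T) ∑_{t=1}^T f t`. -/
def timeAvg (f : ℕ → ℝ) (T : ℕ) : ℝ := (1 / (T : ℝ)) * ∑ t ∈ Finset.Icc 1 T, f t

end CycleWalk

end

noncomputable section

namespace CycleWalk

lemma basisMap_mul_basisMap {X : Type*} [DecidableEq X] [Fintype X] (f g : X → X) :
    basisMap f * basisMap g = basisMap (f ∘ g) := by
  ext x y
  simp [basisMap, Matrix.mul_apply]

lemma one_kronecker_basisMap {X Y : Type*} [DecidableEq X] [DecidableEq Y] (f : Y → Y) :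
    (1 : Matrix X X ℂ) ⊗ₖ basisMap f = basisMap (Prod.map id f) := by
  ext ⟨x, y⟩ ⟨x', y'⟩
  simp [basisMap, Matrix.kroneckerMap_apply, Matrix.one_apply, Prod.ext_iff, ite_and]
  split_ifs <;> rfl

/-- A local operation followed by a permutation of the basis, entrywise. -/
lemma basisMap_mul_one_kronecker_apply {X Y : Type*} [DecidableEq X] [DecidableEq Y] [Fintype X]
    [Fintype Y] (f : X × Y → X × Y) (B : Matrix Y Y ℂ) (z : X × Y) (x : X) (y : Y) :
    (basisMap f * ((1 : Matrix X X ℂ) ⊗ₖ B)) z (x, y) =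
      ∑ y', if z = f (x, y') then B y' y else 0 := by
  simp [basisMap, Matrix.mul_apply, Matrix.one_apply, Fintype.sum_prod_type, ← ite_and]
  rw [Finset.sum_eq_single x] <;> simp +contextual

lemma C_pi_div_four : C (Real.pi / 4) =
    !![((√2 / 2 : ℝ) : ℂ), ((√2 / 2 : ℝ) : ℂ); ((√2 / 2 : ℝ) : ℂ), -((√2 / 2 : ℝ) : ℂ)] := by
  rw [C, Real.cos_pi_div_four, Real.sin_pi_div_four]

lemma C_three_pi_div_four : C (Real.pi / 4 * (1 + 2)) =
    !![-((√2 / 2 : ℝ) : ℂ), ((√2 / 2 : ℝ) : ℂ); ((√2 / 2 : ℝ) : ℂ), ((√2 / 2 : ℝ) : ℂ)] := by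
  have h : Real.pi / 4 * (1 + 2) = Real.pi - Real.pi / 4 := by ring
  rw [C, h, Real.cos_pi_sub, Real.sin_pi_sub, Real.cos_pi_div_four, Real.sin_pi_div_four]
  simp

/-- Relabelling `|n, m, c⟩ ↦ |n, m, m + c⟩`, which carries the walk with memory to the recycled-coin
walk with `φ = 2`. -/
def relabel (d : ℕ) : Label d ≃ Label d :=
  (Equiv.refl _).prodCongr
    { toFun := fun x => (x.1, x.1 + x.2)
      invFun := fun x => (x.1, x.1 + x.2)
      left_inv := by decide
      right_inv := by decide }

@[simp]
lemma relabel_apply (d : ℕ) (n : ZMod d) (m c : Spin) : relabel d (n, m, c) = (n, m, m + c) := rfl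

lemma U_eq (d : ℕ) [NeZero d] (φ : ℝ) :
    U d φ = basisMap (fun x : Label d => (if x.2.2 = dn then x.1 - 1 else x.1 + 1, x.2.swap)) *
      ((1 : Matrix (ZMod d) (ZMod d) ℂ) ⊗ₖ coinFlip φ) := by
  rw [U, swapCoins, one_kronecker_basisMap, shift, basisMap_mul_basisMap]
  rfl

lemma U_submatrix_relabel (d : ℕ) [NeZero d] :
    (U d 2).submatrix (relabel d) (relabel d) = UMem d := by
  ext ⟨n, a, b⟩ ⟨n', a', b'⟩
  rw [Matrix.submatrix_apply, relabel_apply, relabel_apply, U_eq, UMem, shiftMem,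
    basisMap_mul_one_kronecker_apply, basisMap_mul_one_kronecker_apply, coinFlip,
    C_pi_div_four, C_three_pi_div_four]
  fin_cases a <;> fin_cases b <;> fin_cases a' <;> fin_cases b' <;>
    simp [Fintype.sum_prod_type, Matrix.single, Matrix.one_apply]

lemma UMem_pow_mulVec (d : ℕ) [NeZero d] (t : ℕ) (ψ : Label d → ℂ) :
    (UMem d ^ t) *ᵥ (ψ ∘ relabel d) = ((U d 2 ^ t) *ᵥ ψ) ∘ relabel d := by
  induction t with
  | zero => simp
  | succ t ih =>
    rw [pow_succ', pow_succ', ← Matrix.mulVec_mulVec, ← Matrix.mulVec_mulVec, ih,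
      ← U_submatrix_relabel, Matrix.submatrix_mulVec_equiv]
    simp [Function.comp_assoc]

lemma pMem_comp_relabel (d : ℕ) [NeZero d] (n : ZMod d) (t : ℕ) (ψ : Label d → ℂ) :
    pMem d n t (ψ ∘ relabel d) = p d n t 2 ψ := by
  simp only [pMem, p, UMem_pow_mulVec, Function.comp_apply, relabel_apply]
  exact Finset.sum_congr rfl fun m _ =>
    Equiv.sum_comp (Equiv.addLeft m) fun c => ‖((U d 2 ^ t) *ᵥ ψ) (n, m, c)‖ ^ 2

lemma localized_memBasis (d : ℕ) (v : Fin 4 → ℂ) :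
    localized d memBasis (Pᴴ *ᵥ v) = localized d coinBasis v ∘ relabel d := by
  ext ⟨n, a, b⟩
  fin_cases a <;> fin_cases b <;>
    simp [localized, memBasis, coinBasis, P, Fin.sum_univ_four, Pi.single_apply, Matrix.mulVec,
      dotProduct, Matrix.conjTranspose_apply]

end CycleWalk

end

theorem statement6 (d : ℕ) [NeZero d] (v : Fin 4 → ℂ) (hv : ∑ i : Fin 4, ‖v i‖ ^ 2 = 1) :
    (∀ (n : ZMod d) (t : ℕ),
      CycleWalk.pMem d n t (CycleWalk.localized d CycleWalk.memBasis (CycleWalk.Pᴴ *ᵥ v)) =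
        CycleWalk.p d n t 2 (CycleWalk.localized d CycleWalk.coinBasis v)) ∧
    (∀ (n : ZMod d) (T : ℕ), 1 ≤ T →
      CycleWalk.timeAvg (fun t => CycleWalk.pMem d n t
          (CycleWalk.localized d CycleWalk.memBasis (CycleWalk.Pᴴ *ᵥ v))) T =
        CycleWalk.timeAvg (fun t => CycleWalk.p d n t 2
          (CycleWalk.localized d CycleWalk.coinBasis v)) T) ∧
    (∀ (n : ZMod d) (L : ℝ),
      Filter.Tendsto (CycleWalk.timeAvg (fun t => CycleWalk.pMem d n t
          (CycleWalk.localized d CycleWalk.memBasis (CycleWalk.Pᴴ *ᵥ v))))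
          Filter.atTop (nhds L) ↔
        Filter.Tendsto (CycleWalk.timeAvg (fun t => CycleWalk.p d n t 2
          (CycleWalk.localized d CycleWalk.coinBasis v)))
          Filter.atTop (nhds L)) := by
  simp only [CycleWalk.localized_memBasis, CycleWalk.pMem_comp_relabel, implies_true, and_self]
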